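/- Suppose Σ_{n=1}^N q_n(m) ≤ R ln V_N for some integer 2 ≤ m ≤ 2K and a constant R. Fix ε̄ > 0, let 𝓑 = 𝓑_N = {1 ≤ n ≤ N : q_n(m) ≥ ε̄} (so that N₀ := |𝓑| ≤ R ln V_N / ε̄), and let 𝓔 be the σ-algebra generated by {X_n : n ∈ 𝓑}. Then there is a constant C' > 0, independent of N, such that almost surely: | E(S_N | 𝓔) − E(S_N) | ≤ C' N₀ ≤ C' R ln V_N / ε̄, and | Var(S_N | 𝓔) − V_N | ≤ C' ln² V_N. -/

import Mathlib

open MeasureTheory ProbabilityTheory Filter Finset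
open scoped ENNReal Topology

noncomputable section

namespace EdgeworthMC

variable {Ω E : Type*} [MeasurableSpace Ω] [MeasurableSpace E]

/-- The standard Gaussian density `𝔤(u) = (2π)^{-1/2} e^{-u²/2}`. -/
def gaussDensity (u : ℝ) : ℝ := (Real.sqrt (2 * Real.pi))⁻¹ * Real.exp (-u ^ 2 / 2)

/-- `UEChain μ X κ C` : the process `X` is a Markov chain (with respect to the probability
measure `μ`) with transition kernels `κ n` from the state at time `n` to the state at time
`n+1`, and the chain is uniformly elliptic with ellipticity constant `C`:
`C⁻¹ ℙ(X_{n+1} ∈ A) ≤ ℙ(X_{n+1} ∈ A | X_n = x) ≤ C ℙ(X_{n+1} ∈ A)` for a.e. `x`. -/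
def UEChain (μ : Measure Ω) (X : ℕ → Ω → E) (κ : ℕ → Kernel E E) (C : ℝ) : Prop :=
  IsProbabilityMeasure μ ∧
  (∀ n, Measurable (X n)) ∧
  (∀ n, IsMarkovKernel (κ n)) ∧
  (∀ n (A : Set E), MeasurableSet A →
      (μ[fun ω => A.indicator (fun _ => (1 : ℝ)) (X (n + 1) ω) |
          ⨆ i : Fin (n + 1), MeasurableSpace.comap (X i) (inferInstance : MeasurableSpace E)]
        =ᵐ[μ] fun ω => (κ n (X n ω) A).toReal)) ∧
  (∀ n (A : Set E), MeasurableSet A → ∀ᵐ ω ∂μ,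
      κ n (X n ω) A ≤ ENNReal.ofReal C * Measure.map (X (n + 1)) μ A ∧
      Measure.map (X (n + 1)) μ A ≤ ENNReal.ofReal C * κ n (X n ω) A)

/-- Partial sums `S_N = ∑_{n=1}^N f_n(X_n)`. -/
def S (X : ℕ → Ω → E) (f : ℕ → E → ℤ) (N : ℕ) (ω : Ω) : ℤ :=
  ∑ n ∈ Finset.Icc 1 N, f n (X n ω)

/-- `V_N = Var(S_N)`. -/
def VN (μ : Measure Ω) (X : ℕ → Ω → E) (f : ℕ → E → ℤ) (N : ℕ) : ℝ :=
  variance (fun ω => ((S X f N ω : ℝ))) μ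

/-- `σ_N = √V_N`. -/
def sigN (μ : Measure Ω) (X : ℕ → Ω → E) (f : ℕ → E → ℤ) (N : ℕ) : ℝ :=
  Real.sqrt (VN μ X f N)

/-- `a_N = 𝔼(S_N)`. -/
def meanS (μ : Measure Ω) (X : ℕ → Ω → E) (f : ℕ → E → ℤ) (N : ℕ) : ℝ :=
  ∫ ω, ((S X f N ω : ℝ)) ∂μ

/-- The second largest value among the (finitely many) values of `p`, counted with
multiplicity: it equals `min_j max_{j' ≠ j} p j'`. -/
def secondLargest {ι : Type*} (p : ι → ℝ) : ℝ := ⨅ j, sSup (p '' {j}ᶜ)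

/-- `q_n(m)` : the second largest value among `ℙ(Y_n ≡ j mod m)`, `j = 0,…,m-1`. -/
def qres (μ : Measure Ω) (X : ℕ → Ω → E) (f : ℕ → E → ℤ) (n m : ℕ) : ℝ :=
  secondLargest (fun j : ZMod m => (μ {ω | ((f n (X n ω) : ZMod m)) = j}).toReal)

/-- `M_N = min_{2 ≤ m ≤ 2K} ∑_{n=1}^N q_n(m)`. -/
def MN (μ : Measure Ω) (X : ℕ → Ω → E) (f : ℕ → E → ℤ) (K N : ℕ) : ℝ :=
  sInf ((fun m => ∑ n ∈ Finset.Icc 1 N, qres μ X f n m) '' (Set.Icc 2 (2 * K)))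

/-- `S_N` obeys the Edgeworth expansion of order `r` : there are polynomials `P_{b,N}`,
with coefficients uniformly bounded in `N` and degrees not depending on `N`, such that
uniformly in `k ∈ ℤ`,
`ℙ(S_N = k) = ∑_{b=1}^r σ_N^{-b} P_{b,N}(k_N) 𝔤(k_N) + o(σ_N^{-r})`
where `k_N = (k - 𝔼 S_N)/σ_N`. -/
def Edgeworth (μ : Measure Ω) (X : ℕ → Ω → E) (f : ℕ → E → ℤ) (r : ℕ) : Prop :=
  ∃ (D : ℕ) (Cb : ℝ) (P : ℕ → ℕ → Polynomial ℝ),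
    (∀ b N, (P b N).natDegree ≤ D) ∧
    (∀ b N i, |(P b N).coeff i| ≤ Cb) ∧
    ∀ ε > 0, ∃ N₀, ∀ N ≥ N₀, ∀ k : ℤ,
      |(μ {ω | S X f N ω = k}).toReal -
          ∑ b ∈ Finset.Icc 1 r, (sigN μ X f N)⁻¹ ^ b *
            (P b N).eval (((k : ℝ) - meanS μ X f N) / sigN μ X f N) *
            gaussDensity (((k : ℝ) - meanS μ X f N) / sigN μ X f N)|
        ≤ ε * (sigN μ X f N)⁻¹ ^ r

/-- The σ-algebra generated by `X_{j 1}, …, X_{j ℓ}`. -/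
def sigmaOf (X : ℕ → Ω → E) {ℓ : ℕ} (j : Fin ℓ → ℕ) : MeasurableSpace Ω :=
  ⨆ i : Fin ℓ, MeasurableSpace.comap (X (j i)) (inferInstance : MeasurableSpace E)

/-- Conditional probability of the event `s` given the σ-algebra `m`. -/
def condProb (μ : Measure Ω) (m : MeasurableSpace Ω) (s : Set Ω) : Ω → ℝ :=
  μ[s.indicator (fun _ => (1 : ℝ)) | m]

/-- `S_N` obeys the Edgeworth expansion of order `r` in a conditionally stable way:
for every `ℓ`, the order `r` Edgeworth expansion holds for the conditional law of `S_N`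
given `X_{j_1},…,X_{j_ℓ}`, with error term `o_ℓ(σ_N^{-r})` and polynomial coefficient
bounds depending only on `ℓ` (and `r`), uniformly over all choices of indices
`1 ≤ j_1,…,j_ℓ ≤ N`. -/
def CondStableEdgeworth (μ : Measure Ω) (X : ℕ → Ω → E) (f : ℕ → E → ℤ) (r : ℕ) : Prop :=
  ∀ ℓ : ℕ, ∃ (D : ℕ) (Cb : ℝ), ∀ ε > 0, ∃ N₀, ∀ N ≥ N₀,
    ∀ j : Fin ℓ → ℕ, (∀ i, j i ∈ Finset.Icc 1 N) →
      ∃ P : ℕ → Ω → Polynomial ℝ,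
        (∀ b ω, (P b ω).natDegree ≤ D) ∧
        (∀ b ω i, |(P b ω).coeff i| ≤ Cb) ∧
        ∀ᵐ ω ∂μ, ∀ k : ℤ,
          |condProb μ (sigmaOf X j) {ω' | S X f N ω' = k} ω -
              ∑ b ∈ Finset.Icc 1 r, (sigN μ X f N)⁻¹ ^ b *
                (P b ω).eval (((k : ℝ) -
                    (μ[fun ω' => ((S X f N ω' : ℝ)) | sigmaOf X j]) ω) / sigN μ X f N) *
                gaussDensity (((k : ℝ) -
                    (μ[fun ω' => ((S X f N ω' : ℝ)) | sigmaOf X j]) ω) / sigN μ X f N)|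
            ≤ ε * (sigN μ X f N)⁻¹ ^ r

/-- `t` is a resonant point: `t = 2πl/m` with `0 < m ≤ 2K`, `0 ≤ l < m`. -/
def IsResonant (K : ℕ) (t : ℝ) : Prop :=
  ∃ l m : ℕ, 0 < m ∧ m ≤ 2 * K ∧ l < m ∧ t = 2 * Real.pi * l / m

/-- The conditional characteristic function `𝔼[e^{itS_N} | X_{j_1},…,X_{j_ℓ}]`. -/
def condChar (μ : Measure Ω) (X : ℕ → Ω → E) (f : ℕ → E → ℤ) (t : ℝ) (N : ℕ)
    {ℓ : ℕ} (j : Fin ℓ → ℕ) : Ω → ℂ :=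
  μ[fun ω => Complex.exp (Complex.I * (t : ℂ) * ((S X f N ω : ℤ) : ℂ)) | sigmaOf X j]

end EdgeworthMC

namespace EdgeworthMC

variable {Ω E : Type*} [MeasurableSpace Ω] [MeasurableSpace E]

/-- The σ-algebra `𝓔` generated by `{X_n : n ∈ 𝓑}`. -/
def sigmaFinset (X : ℕ → Ω → E) (𝓑 : Finset ℕ) : MeasurableSpace Ω :=
  ⨆ n ∈ 𝓑, MeasurableSpace.comap (X n) (inferInstance : MeasurableSpace E)

/-- The set `𝓑 = 𝓑_N = {1 ≤ n ≤ N : q_n(m) ≥ εbar}` of "bad" indices. -/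
def bigSet (μ : Measure Ω) (X : ℕ → Ω → E) (f : ℕ → E → ℤ) (m N : ℕ) (ε : ℝ) :
    Finset ℕ :=
  @Finset.filter _ (fun n => ε ≤ qres μ X f n m) (Classical.decPred _) (Finset.Icc 1 N)

/-- The conditional variance `Var(g | m) = 𝔼[g² | m] - (𝔼[g | m])²`. -/
def condVar (μ : Measure Ω) (m : MeasurableSpace Ω) (g : Ω → ℝ) : Ω → ℝ :=
  fun ω => (μ[fun ω' => (g ω') ^ 2 | m]) ω - ((μ[g | m]) ω) ^ 2


/-!
Uniform ellipticity makes the chain `ψ`-mixing at a geometric rate: a fraction `C⁻¹` of each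
transition does not depend on the current state, so every step contracts the dependence on the past
by the factor `1 - C⁻¹`. Since the past and the future of a window of times are themselves almost
independent of each other, the window is `ψ`-mixing with respect to its two-sided exterior. Hence
conditioning on `{X_n : n ∈ 𝓑}` moves the mean of `Y_i` by a quantity exponentially small in the
distance `d i` from `i` to `𝓑`, and the geometric series bounds the total by `O(|𝓑|)`.

For the variance, the sum over pairs `(i, j)` of the changes in `Cov(Y_i, Y_j)` has to be bounded.
Either both `i` and `j` are far from `𝓑`, and all the expectations involved hardly change, or one of
the two times is far from everything else, and both covariances are small. So the change is
exponentially small in the median of `d i`, `d j` and `|i - j|`, hence in half the sum of two of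
these distances, and the sum over pairs is `O(|𝓑|²)`. Finally, every `n ∈ 𝓑` contributes at least
`ε̄` to `∑ q_n(m)`, so `|𝓑| = O(ln V_N)`.
-/

section TrimComparison

variable {α : Type*} {m m₁ m₂ m₀ : MeasurableSpace α} {ν₁ ν₂ : Measure α}

theorem trim_le_trim_iff (hm : m ≤ m₀) :
    ν₁.trim hm ≤ ν₂.trim hm ↔ ∀ A, MeasurableSet[m] A → ν₁ A ≤ ν₂ A :=
  Measure.le_iff.trans <| forall₂_congr fun _ hA => by
    rw [trim_measurableSet_eq hm hA, trim_measurableSet_eq hm hA]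

theorem lintegral_le_of_trim_le_trim {hm : m ≤ m₀} (h : ν₁.trim hm ≤ ν₂.trim hm)
    {φ : α → ℝ≥0∞} (hφ : Measurable[m] φ) : ∫⁻ x, φ x ∂ν₁ ≤ ∫⁻ x, φ x ∂ν₂ := by
  rw [← lintegral_trim hm hφ, ← lintegral_trim hm hφ]
  exact lintegral_mono' h le_rfl

theorem integral_le_of_trim_le_trim {hm : m ≤ m₀} (h : ν₁.trim hm ≤ ν₂.trim hm)
    {φ : α → ℝ} (hφ : StronglyMeasurable[m] φ) (hint : Integrable φ ν₂) (h0 : 0 ≤ᵐ[ν₂] φ) :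
    ∫ x, φ x ∂ν₁ ≤ ∫ x, φ x ∂ν₂ := by
  rw [integral_trim hm hφ, integral_trim hm hφ]
  exact integral_mono_measure h
    (stronglyMeasurable_zero.ae_le_trim_of_stronglyMeasurable hm hφ h0) (hint.trim hm hφ)

theorem isSetSemiring_image2_inter (m₁ m₂ : MeasurableSpace α) :
    IsSetSemiring
      (Set.image2 (· ∩ ·) {A | MeasurableSet[m₁] A} {A | MeasurableSet[m₂] A}) where
  empty_mem := ⟨∅, @MeasurableSet.empty _ m₁, ∅, @MeasurableSet.empty _ m₂, Set.inter_self _⟩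
  inter_mem := by
    rintro _ ⟨A₁, hA₁, A₂, hA₂, rfl⟩ _ ⟨B₁, hB₁, B₂, hB₂, rfl⟩
    exact ⟨A₁ ∩ B₁, hA₁.inter hB₁, A₂ ∩ B₂, hA₂.inter hB₂, Set.inter_inter_inter_comm ..⟩
  sdiff_eq_sUnion' := by
    classical
    rintro _ ⟨A₁, hA₁, A₂, hA₂, rfl⟩ _ ⟨B₁, hB₁, B₂, hB₂, rfl⟩
    refine ⟨{(A₁ \ B₁) ∩ A₂, (A₁ ∩ B₁) ∩ (A₂ \ B₂)}, ?_, ?_, ?_⟩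
    · rw [Finset.coe_pair, Set.pair_subset_iff]
      exact ⟨⟨_, hA₁.diff hB₁, _, hA₂, rfl⟩, ⟨_, hA₁.inter hB₁, _, hA₂.diff hB₂, rfl⟩⟩
    · rw [Finset.coe_pair]
      exact Set.pairwise_pair_of_symm.2 fun _ =>
        Set.disjoint_left.2 fun x hx hx' => hx.1.2 hx'.1.2
    · rw [Finset.coe_pair, Set.sUnion_pair]
      ext x
      simp only [Set.mem_sdiff, Set.mem_inter_iff, Set.mem_union]
      tauto

theorem generateFrom_image2_inter (m₁ m₂ : MeasurableSpace α) :
    MeasurableSpace.generateFrom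
      (Set.image2 (· ∩ ·) {A | MeasurableSet[m₁] A} {A | MeasurableSet[m₂] A}) = m₁ ⊔ m₂ := by
  refine le_antisymm (MeasurableSpace.generateFrom_le ?_) (sup_le ?_ ?_)
  · rintro _ ⟨A₁, hA₁, A₂, hA₂, rfl⟩
    exact @MeasurableSet.inter _ (m₁ ⊔ m₂) _ _ ((le_sup_left : m₁ ≤ m₁ ⊔ m₂) _ hA₁)
      ((le_sup_right : m₂ ≤ m₁ ⊔ m₂) _ hA₂)
  · exact fun A hA => MeasurableSpace.measurableSet_generateFrom
      ⟨A, hA, Set.univ, @MeasurableSet.univ _ m₂, Set.inter_univ A⟩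
  · exact fun A hA => MeasurableSpace.measurableSet_generateFrom
      ⟨Set.univ, @MeasurableSet.univ _ m₁, A, hA, Set.univ_inter A⟩

theorem le_of_forall_mem_isSetSemiring [MeasurableSpace α] {ν₁ ν₂ : Measure α}
    [IsFiniteMeasure ν₁] [IsFiniteMeasure ν₂] {𝒞 : Set (Set α)} (h𝒞 : IsSetSemiring 𝒞)
    (huniv : Set.univ ∈ 𝒞) (hgen : ‹MeasurableSpace α› = MeasurableSpace.generateFrom 𝒞)
    (h : ∀ A ∈ 𝒞, ν₁ A ≤ ν₂ A) : ν₁ ≤ ν₂ := by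
  have hmeas : ∀ A ∈ 𝒞, MeasurableSet A := fun A hA =>
    hgen ▸ MeasurableSpace.measurableSet_generateFrom hA
  have hsup : ∀ A ∈ supClosure 𝒞, ν₁ A ≤ ν₂ A := by
    intro A hA
    obtain ⟨P, hP⟩ := h𝒞.mem_supClosure_iff.1 hA
    have hsum : ∀ ν : Measure α, ν A = ∑ B ∈ P.parts, ν B := fun ν => by
      conv_lhs => rw [← P.sup_parts, Finset.sup_id_set_eq_sUnion, Set.sUnion_eq_biUnion]
      exact measure_biUnion_finset P.disjoint fun B hB => hmeas B (hP hB)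
    rw [hsum, hsum]
    exact Finset.sum_le_sum fun B hB => h B (hP hB)
  refine Measure.le_iff.2 fun A hA => ENNReal.le_of_forall_pos_le_add fun ε hε _ => ?_
  obtain ⟨B, hB, hAB⟩ := exists_measure_symmDiff_lt_of_generateFrom_isSetSemiring
    (μ := ν₁ + ν₂) h𝒞 ⟨{Set.univ}, by simp, by simpa using huniv, by simp⟩ hgen hA
    (ε := ε) (by exact_mod_cast hε)
  calc ν₁ A ≤ ν₁ B + ν₁ (A \ B) := tsub_le_iff_left.1 le_measure_sdiff
    _ ≤ ν₂ B + ν₁ (A \ B) := add_le_add_left (hsup B hB) _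
    _ ≤ ν₂ A + ν₂ (B \ A) + ν₁ (A \ B) := by gcongr; exact tsub_le_iff_left.1 le_measure_sdiff
    _ ≤ ν₂ A + (ν₂ (symmDiff B A) + ν₁ (symmDiff B A)) := by
      rw [add_assoc]
      gcongr
      exacts [Set.subset_union_left, Set.subset_union_right]
    _ ≤ ν₂ A + ε := by
      gcongr
      rw [add_comm]
      exact hAB.le

theorem trim_sup_le_trim_sup [IsFiniteMeasure ν₁] [IsFiniteMeasure ν₂] (h₁ : m₁ ≤ m₀)
    (h₂ : m₂ ≤ m₀)
    (h : ∀ A₁ A₂, MeasurableSet[m₁] A₁ → MeasurableSet[m₂] A₂ → ν₁ (A₁ ∩ A₂) ≤ ν₂ (A₁ ∩ A₂)) :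
    ν₁.trim (sup_le h₁ h₂) ≤ ν₂.trim (sup_le h₁ h₂) := by
  refine @le_of_forall_mem_isSetSemiring α (m₁ ⊔ m₂) _ _ _ _ _ (isSetSemiring_image2_inter m₁ m₂)
    ⟨Set.univ, @MeasurableSet.univ _ m₁, Set.univ, @MeasurableSet.univ _ m₂, Set.inter_self _⟩
    (generateFrom_image2_inter m₁ m₂).symm ?_
  rintro _ ⟨A₁, hA₁, A₂, hA₂, rfl⟩
  have hA : MeasurableSet[m₁ ⊔ m₂] (A₁ ∩ A₂) := @MeasurableSet.inter _ (m₁ ⊔ m₂) _ _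
    ((le_sup_left : m₁ ≤ m₁ ⊔ m₂) _ hA₁) ((le_sup_right : m₂ ≤ m₁ ⊔ m₂) _ hA₂)
  rw [trim_measurableSet_eq _ hA, trim_measurableSet_eq _ hA]
  exact h A₁ A₂ hA₁ hA₂

end TrimComparison

theorem ae_abs_condExp_le_of_abs_setIntegral_le {α : Type*} {m m₀ : MeasurableSpace α}
    {μ : Measure α} [IsFiniteMeasure μ] (hm : m ≤ m₀) {g : α → ℝ} (hg : Integrable g μ) {c : ℝ}
    (h : ∀ A, MeasurableSet[m] A → |∫ x in A, g x ∂μ| ≤ c * μ.real A) :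
    ∀ᵐ x ∂μ, |(μ[g | m]) x| ≤ c := by
  have hint := (integrable_condExp (μ := μ) (f := g) (m := m)).trim hm stronglyMeasurable_condExp
  have hset : ∀ A, MeasurableSet[m] A → |∫ x in A, (μ[g | m]) x ∂μ.trim hm| ≤ c * μ.real A :=
    fun A hA => by
      rw [← setIntegral_trim hm stronglyMeasurable_condExp hA, setIntegral_condExp hm hg hA]
      exact h A hA
  have hconst : ∀ a : ℝ, ∀ A, MeasurableSet[m] A → ∫ _ in A, a ∂μ.trim hm = a * μ.real A :=
    fun a A hA => by
      rw [setIntegral_const, measureReal_def, trim_measurableSet_eq hm hA, smul_eq_mul, mul_comm,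
        measureReal_def]
  refine ae_of_ae_trim hm ?_
  filter_upwards [ae_le_of_forall_setIntegral_le hint (integrable_const c) fun A hA _ =>
      (le_of_abs_le (hset A hA)).trans_eq (hconst c A hA).symm,
    ae_le_of_forall_setIntegral_le (integrable_const (-c)) hint fun A hA _ => by
      rw [hconst (-c) A hA, neg_mul]
      exact neg_le_of_abs_le (hset A hA)] with x hle hge
  exact abs_le.2 ⟨hge, hle⟩

section PsiMixing

variable {α : Type*} {m₁ m₂ m₃ m₀ : MeasurableSpace α} {μ : Measure α} {ψ : ℝ} {A : Set α}

/-- The `ψ`-mixing condition `|ℙ(A₁ ∩ A₂) - ℙ(A₁) ℙ(A₂)| ≤ ψ ℙ(A₁) ℙ(A₂)` for `Aᵢ ∈ mᵢ`, which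
quantifies how close the σ-algebras `m₁` and `m₂` are to being independent. The number `ψ` is any
upper bound for the `ψ`-mixing coefficient of `m₁` and `m₂`, not the coefficient itself. -/
def PsiMixing (μ : Measure α) (m₁ m₂ : MeasurableSpace α) (ψ : ℝ) : Prop :=
  ∀ A₁ A₂, MeasurableSet[m₁] A₁ → MeasurableSet[m₂] A₂ →
    |μ.real (A₁ ∩ A₂) - μ.real A₁ * μ.real A₂| ≤ ψ * μ.real A₁ * μ.real A₂

theorem PsiMixing.symm (h : PsiMixing μ m₁ m₂ ψ) : PsiMixing μ m₂ m₁ ψ := fun A₂ A₁ hA₂ hA₁ => by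
  rw [Set.inter_comm, mul_comm (μ.real A₂), mul_right_comm]
  exact h A₁ A₂ hA₁ hA₂

theorem PsiMixing.mono {m₁' m₂' : MeasurableSpace α} {ψ' : ℝ} (h : PsiMixing μ m₁ m₂ ψ)
    (h₁ : m₁' ≤ m₁) (h₂ : m₂' ≤ m₂) (hψ : ψ ≤ ψ') : PsiMixing μ m₁' m₂' ψ' :=
  fun A₁ A₂ hA₁ hA₂ => (h A₁ A₂ (h₁ _ hA₁) (h₂ _ hA₂)).trans (by gcongr)

section FiniteMeasure

variable [IsFiniteMeasure μ]

theorem restrict_apply_le_smul_apply_iff {c : ℝ} (hc : 0 ≤ c) {B : Set α} (hB : MeasurableSet B) :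
    μ.restrict A B ≤ (ENNReal.ofReal c • μ) B ↔ μ.real (A ∩ B) ≤ c * μ.real B := by
  rw [Measure.restrict_apply hB, Set.inter_comm, Measure.smul_apply, smul_eq_mul,
    ← ofReal_measureReal, ← ofReal_measureReal (s := B), ← ENNReal.ofReal_mul hc,
    ENNReal.ofReal_le_ofReal_iff (by positivity)]

theorem smul_apply_le_restrict_apply_iff {c : ℝ} {B : Set α} (hB : MeasurableSet B) :
    (ENNReal.ofReal c • μ) B ≤ μ.restrict A B ↔ c * μ.real B ≤ μ.real (A ∩ B) := by
  rw [Measure.restrict_apply hB, Set.inter_comm, Measure.smul_apply, smul_eq_mul,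
    ← ofReal_measureReal, ← ofReal_measureReal (s := A ∩ B),
    ← ENNReal.ofReal_mul' measureReal_nonneg, ENNReal.ofReal_le_ofReal_iff measureReal_nonneg]

theorem psiMixing_iff_trim_le_trim (hψ : 0 ≤ ψ) (h₂ : m₂ ≤ m₀) :
    PsiMixing μ m₁ m₂ ψ ↔ ∀ A, MeasurableSet[m₁] A →
      (μ.restrict A).trim h₂ ≤ (ENNReal.ofReal ((1 + ψ) * μ.real A) • μ).trim h₂ ∧
        (ENNReal.ofReal ((1 - ψ) * μ.real A) • μ).trim h₂ ≤ (μ.restrict A).trim h₂ := by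
  simp only [trim_le_trim_iff, ← forall₂_and]
  refine ⟨fun h A hA B hB => ?_, fun h A B hA hB => ?_⟩
  · rw [restrict_apply_le_smul_apply_iff (by positivity) (h₂ B hB),
      smul_apply_le_restrict_apply_iff (h₂ B hB)]
    have := abs_le.1 (h A B hA hB)
    constructor <;> linarith
  · have := h A hA B hB
    rw [restrict_apply_le_smul_apply_iff (by positivity) (h₂ B hB),
      smul_apply_le_restrict_apply_iff (h₂ B hB)] at this
    exact abs_le.2 ⟨by linarith, by linarith⟩

theorem psiMixing_sup_right_of_forall_inter (h₁ : m₁ ≤ m₀) (h₂ : m₂ ≤ m₀) (hψ : 0 ≤ ψ)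
    (h : ∀ A A₁ A₂, MeasurableSet[m₃] A → MeasurableSet[m₁] A₁ → MeasurableSet[m₂] A₂ →
      |μ.real (A ∩ (A₁ ∩ A₂)) - μ.real A * μ.real (A₁ ∩ A₂)| ≤ ψ * μ.real A * μ.real (A₁ ∩ A₂)) :
    PsiMixing μ m₃ (m₁ ⊔ m₂) ψ := by
  refine (psiMixing_iff_trim_le_trim hψ (sup_le h₁ h₂)).2 fun A hA => ?_
  have (c : ℝ) : IsFiniteMeasure (ENNReal.ofReal c • μ) := μ.smul_finite ENNReal.ofReal_ne_top
  refine ⟨trim_sup_le_trim_sup h₁ h₂ fun A₁ A₂ hA₁ hA₂ => ?_,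
    trim_sup_le_trim_sup h₁ h₂ fun A₁ A₂ hA₁ hA₂ => ?_⟩
  all_goals have hA' := abs_le.1 (h A A₁ A₂ hA hA₁ hA₂)
  · rw [restrict_apply_le_smul_apply_iff (by positivity) ((h₁ _ hA₁).inter (h₂ _ hA₂))]
    linarith
  · rw [smul_apply_le_restrict_apply_iff ((h₁ _ hA₁).inter (h₂ _ hA₂))]
    linarith

end FiniteMeasure

variable [IsProbabilityMeasure μ]

theorem psiMixing_bot_left (m : MeasurableSpace α) (hψ : 0 ≤ ψ) : PsiMixing μ ⊥ m ψ := by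
  intro A₁ A₂ hA₁ _
  rcases MeasurableSpace.measurableSet_bot_iff.1 hA₁ with rfl | rfl
  · simp
  · simpa using mul_nonneg hψ measureReal_nonneg

theorem PsiMixing.nonneg (h : PsiMixing μ m₁ m₂ ψ) : 0 ≤ ψ := by
  simpa using h Set.univ Set.univ (@MeasurableSet.univ _ m₁) (@MeasurableSet.univ _ m₂)

theorem PsiMixing.sup_right (h₁ : m₁ ≤ m₀) (h₃ : m₃ ≤ m₀)
    (h : PsiMixing μ m₁ m₂ ψ) (h' : PsiMixing μ (m₁ ⊔ m₂) m₃ ψ) (hψ : ψ ≤ 1 / 2) :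
    PsiMixing μ m₂ (m₁ ⊔ m₃) (8 * ψ) := by
  have hψ0 := h.nonneg
  refine psiMixing_sup_right_of_forall_inter h₁ h₃ (by positivity) fun A₂ A₁ A₃ hA₂ hA₁ hA₃ => ?_
  have hA₁' : MeasurableSet[m₁ ⊔ m₂] A₁ := (le_sup_left : m₁ ≤ m₁ ⊔ m₂) _ hA₁
  have hA₁₂ : MeasurableSet[m₁ ⊔ m₂] (A₁ ∩ A₂) := @MeasurableSet.inter _ (m₁ ⊔ m₂) _ _ hA₁'
    ((le_sup_right : m₂ ≤ m₁ ⊔ m₂) _ hA₂)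
  obtain ⟨l₁₂, u₁₂⟩ := abs_le.1 (h A₁ A₂ hA₁ hA₂)
  obtain ⟨l₁₃, u₁₃⟩ := abs_le.1 (h' A₁ A₃ hA₁' hA₃)
  obtain ⟨l₁₂₃, u₁₂₃⟩ := abs_le.1 (h' (A₁ ∩ A₂) A₃ hA₁₂ hA₃)
  rw [show A₁ ∩ A₂ ∩ A₃ = A₂ ∩ (A₁ ∩ A₃) by grind] at l₁₂₃ u₁₂₃
  set p := μ.real (A₂ ∩ (A₁ ∩ A₃))
  set q := μ.real A₂ * μ.real (A₁ ∩ A₃)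
  set T := μ.real A₁ * μ.real A₂ * μ.real A₃
  have hT : 0 ≤ T := by positivity
  have hp_le : p ≤ (1 + ψ) ^ 2 * T := by
    linarith [mul_le_mul_of_nonneg_left u₁₂ (by positivity : 0 ≤ (1 + ψ) * μ.real A₃)]
  have hle_p : (1 - ψ) ^ 2 * T ≤ p := by
    linarith [mul_le_mul_of_nonneg_left l₁₂
      (mul_nonneg (by linarith) measureReal_nonneg : 0 ≤ (1 - ψ) * μ.real A₃)]
  have hq_le : q ≤ (1 + ψ) * T := by
    linarith [mul_le_mul_of_nonneg_left u₁₃ (measureReal_nonneg (μ := μ) (s := A₂))]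
  have hle_q : (1 - ψ) * T ≤ q := by
    linarith [mul_le_mul_of_nonneg_left l₁₃ (measureReal_nonneg (μ := μ) (s := A₂))]
  have hpq : |p - q| ≤ 4 * ψ * T := abs_le.2 ⟨by nlinarith, by nlinarith⟩
  have hTq : T ≤ 2 * q := by nlinarith
  calc |p - q| ≤ 4 * ψ * T := hpq
    _ ≤ 4 * ψ * (2 * q) := by gcongr
    _ = 8 * ψ * μ.real A₂ * μ.real (A₁ ∩ A₃) := by ring

theorem PsiMixing.abs_setIntegral_sub_le (h : PsiMixing μ m₁ m₂ ψ) (h₂ : m₂ ≤ m₀)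
    (hA : MeasurableSet[m₁] A) {φ : α → ℝ} (hφ : StronglyMeasurable[m₂] φ)
    (hint : Integrable φ μ) (h0 : 0 ≤ᵐ[μ] φ) :
    |∫ x in A, φ x ∂μ - μ.real A * ∫ x, φ x ∂μ| ≤ ψ * μ.real A * ∫ x, φ x ∂μ := by
  have hψ := h.nonneg
  obtain ⟨hle, hge⟩ := (psiMixing_iff_trim_le_trim hψ h₂).1 h A hA
  have hle := integral_le_of_trim_le_trim hle hφ (hint.smul_measure ENNReal.ofReal_ne_top)
    (Measure.ae_smul_measure h0 _)
  have hge := integral_le_of_trim_le_trim hge hφ hint.restrict (ae_restrict_of_ae h0)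
  rw [integral_smul_measure, smul_eq_mul] at hle hge
  rw [ENNReal.toReal_ofReal (by positivity)] at hle
  have hge' := (mul_le_mul_of_nonneg_right (le_max_left ((1 - ψ) * μ.real A) 0)
    (integral_nonneg_of_ae h0)).trans hge
  exact abs_le.2 ⟨by linarith, by linarith⟩

theorem PsiMixing.ae_abs_condExp_sub_integral_le (h : PsiMixing μ m₁ m₂ ψ) (h₁ : m₁ ≤ m₀)
    (h₂ : m₂ ≤ m₀) {φ : α → ℝ} {L : ℝ} (hφ : StronglyMeasurable[m₁] φ) (hL : ∀ x, |φ x| ≤ L) :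
    ∀ᵐ x ∂μ, |(μ[φ | m₂]) x - ∫ y, φ y ∂μ| ≤ 2 * ψ * L := by
  have hint : Integrable φ μ :=
    .of_bound (hφ.mono h₁).aestronglyMeasurable L (ae_of_all _ hL)
  have hmean : ∫ x, φ x ∂μ ≤ L := (integral_mono hint (integrable_const L)
    fun x => le_of_abs_le (hL x)).trans_eq (by simp)
  have hψ := h.nonneg
  -- The mixing estimate for integrals is applied to the nonnegative function `φ + L`.
  have hset : ∀ A, MeasurableSet[m₂] A →
      |∫ x in A, (φ x - ∫ y, φ y ∂μ) ∂μ| ≤ 2 * ψ * L * μ.real A := by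
    intro A hA
    have := h.symm.abs_setIntegral_sub_le h₁ hA (hφ.add_const L)
      (hint.add (integrable_const L))
      (ae_of_all _ fun x => neg_le_iff_add_nonneg.1 (neg_le_of_abs_le (hL x)))
    rw [integral_add hint (integrable_const L),
      integral_add hint.integrableOn (integrable_const L).integrableOn] at this
    rw [integral_sub hint.integrableOn (integrable_const _).integrableOn]
    simp only [integral_const, probReal_univ, measureReal_restrict_apply_univ, smul_eq_mul,
      one_mul] at this ⊢
    calc _ = _ := by ring_nf
      _ ≤ _ := this
      _ ≤ ψ * μ.real A * (L + L) := by gcongr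
      _ = _ := by ring
  filter_upwards [ae_abs_condExp_le_of_abs_setIntegral_le h₂ (hint.sub (integrable_const _)) hset,
    condExp_sub hint (integrable_const (∫ y, φ y ∂μ)) m₂] with x hx hsub
  rwa [hsub, Pi.sub_apply, condExp_const h₂] at hx

end PsiMixing

section SigmaFinset

variable {α : Type*}

theorem sigmaFinset_le {X : ℕ → Ω → E} (hX : ∀ n, Measurable (X n)) (B : Finset ℕ) :
    sigmaFinset X B ≤ ‹MeasurableSpace Ω› :=
  iSup₂_le fun n _ => (hX n).comap_le

theorem comap_le_sigmaFinset (X : ℕ → α → E) {B : Finset ℕ} {n : ℕ} (h : n ∈ B) :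
    MeasurableSpace.comap (X n) (inferInstance : MeasurableSpace E) ≤ sigmaFinset X B :=
  le_iSup₂_of_le n h le_rfl

theorem measurable_sigmaFinset (X : ℕ → α → E) {B : Finset ℕ} {n : ℕ} (h : n ∈ B) :
    Measurable[sigmaFinset X B] (X n) :=
  (comap_measurable (X n)).mono (comap_le_sigmaFinset X h) le_rfl

theorem sigmaFinset_mono (X : ℕ → α → E) {B B' : Finset ℕ} (h : B ⊆ B') :
    sigmaFinset X B ≤ sigmaFinset X B' :=
  iSup₂_le fun _ hn => comap_le_sigmaFinset X (h hn)

theorem sigmaFinset_union (X : ℕ → α → E) (B B' : Finset ℕ) :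
    sigmaFinset X (B ∪ B') = sigmaFinset X B ⊔ sigmaFinset X B' := by
  simp only [sigmaFinset, Finset.iSup_union]

theorem sigmaFinset_singleton (X : ℕ → α → E) (n : ℕ) :
    sigmaFinset X {n} = MeasurableSpace.comap (X n) (inferInstance : MeasurableSpace E) := by
  simp [sigmaFinset]

theorem sigmaFinset_empty (X : ℕ → α → E) : sigmaFinset X ∅ = ⊥ := by
  simp [sigmaFinset]

theorem iSup_fin_comap_eq_sigmaFinset_range (X : ℕ → α → E) (n : ℕ) :
    (⨆ i : Fin n, MeasurableSpace.comap (X i) (inferInstance : MeasurableSpace E))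
      = sigmaFinset X (Finset.range n) :=
  le_antisymm (iSup_le fun i => comap_le_sigmaFinset X (Finset.mem_range.2 i.2))
    (iSup₂_le fun i hi => le_iSup_of_le (⟨i, Finset.mem_range.1 hi⟩ : Fin n) le_rfl)

end SigmaFinset

namespace UEChain

variable {μ : Measure Ω} {X : ℕ → Ω → E} {κ : ℕ → Kernel E E} {C ψ : ℝ}

theorem one_le (hchain : UEChain μ X κ C) : 1 ≤ C := by
  obtain ⟨_, hX, _, -, hell⟩ := hchain
  obtain ⟨ω, hω, -⟩ := (hell 0 Set.univ MeasurableSet.univ).exists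
  rw [Measure.map_apply (hX 1) MeasurableSet.univ, Set.preimage_univ, measure_univ, measure_univ,
    mul_one] at hω
  exact ENNReal.one_le_ofReal.1 hω

theorem one_sub_inv_nonneg (hchain : UEChain μ X κ C) : 0 ≤ 1 - C⁻¹ :=
  sub_nonneg.2 (inv_le_one_of_one_le₀ hchain.one_le)

theorem one_sub_inv_lt_one (hchain : UEChain μ X κ C) : 1 - C⁻¹ < 1 :=
  sub_lt_self _ (inv_pos.2 (zero_lt_one.trans_le hchain.one_le))

theorem ae_kernel_real_mem_Icc (hchain : UEChain μ X κ C) (k : ℕ) {A : Set E}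
    (hA : MeasurableSet A) :
    ∀ᵐ ω ∂μ, (κ k (X k ω)).real A ∈
      Set.Icc (C⁻¹ * μ.real (X (k + 1) ⁻¹' A)) (C * μ.real (X (k + 1) ⁻¹' A)) := by
  have hC := zero_lt_one.trans_le hchain.one_le
  obtain ⟨_, hX, _, -, hell⟩ := hchain
  filter_upwards [hell k A hA] with ω hω
  rw [Measure.map_apply (hX _) hA] at hω
  have hle := ENNReal.toReal_mono (by finiteness) hω.1
  have hge := ENNReal.toReal_mono (by finiteness) hω.2
  rw [ENNReal.toReal_mul, ENNReal.toReal_ofReal hC.le] at hle hge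
  exact ⟨(inv_mul_le_iff₀ hC).2 hge, hle⟩

theorem integrable_kernel_real (hchain : UEChain μ X κ C) (k : ℕ) {A : Set E}
    (hA : MeasurableSet A) : Integrable (fun ω => (κ k (X k ω)).real A) μ := by
  obtain ⟨_, hX, _, -, -⟩ := hchain
  refine .of_bound (((κ k).measurable_coe hA).ennreal_toReal.comp (hX k)).aestronglyMeasurable 1
    (ae_of_all _ fun ω => ?_)
  rw [Real.norm_of_nonneg measureReal_nonneg]
  exact measureReal_le_one

theorem measureReal_inter_preimage_succ (hchain : UEChain μ X κ C) {k : ℕ} {D : Set Ω}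
    (hD : MeasurableSet[sigmaFinset X (range (k + 1))] D) {A : Set E} (hA : MeasurableSet A) :
    μ.real (D ∩ X (k + 1) ⁻¹' A) = ∫ ω in D, (κ k (X k ω)).real A ∂μ := by
  obtain ⟨_, hX, -, htr, -⟩ := hchain
  have hle := sigmaFinset_le hX (range (k + 1))
  have htr := htr k A hA
  rw [iSup_fin_comap_eq_sigmaFinset_range] at htr
  calc μ.real (D ∩ X (k + 1) ⁻¹' A)
      = ∫ ω in D, (X (k + 1) ⁻¹' A).indicator 1 ω ∂μ := by
        rw [integral_indicator_one (hX _ hA), measureReal_restrict_apply (hX _ hA), Set.inter_comm]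
    _ = ∫ ω in D, (μ[fun ω => A.indicator (fun _ => (1 : ℝ)) (X (k + 1) ω) |
          sigmaFinset X (range (k + 1))]) ω ∂μ :=
        (setIntegral_condExp hle ((integrable_const (1 : ℝ)).indicator (hX _ hA)) hD).symm
    _ = ∫ ω in D, (κ k (X k ω)).real A ∂μ := integral_congr_ae (ae_restrict_of_ae htr)

theorem measure_inter_preimage_succ (hchain : UEChain μ X κ C) {k : ℕ} {D : Set Ω}
    (hD : MeasurableSet[sigmaFinset X (range (k + 1))] D) {A : Set E} (hA : MeasurableSet A) :
    μ (D ∩ X (k + 1) ⁻¹' A) = ∫⁻ ω in D, κ k (X k ω) A ∂μ := by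
  have h := hchain.measureReal_inter_preimage_succ hD hA
  have hint := (hchain.integrable_kernel_real k hA).restrict (s := D)
  obtain ⟨_, -, _, -, -⟩ := hchain
  rw [← ofReal_measureReal, h,
    ofReal_integral_eq_lintegral_ofReal hint (ae_of_all _ fun _ => measureReal_nonneg)]
  exact lintegral_congr fun ω => ofReal_measureReal

theorem psiMixing_range_succ (hchain : UEChain μ X κ C) (k : ℕ) :
    PsiMixing μ (sigmaFinset X (range (k + 1))) (sigmaFinset X {k + 1}) (C * (1 - C⁻¹)) := by
  rw [sigmaFinset_singleton]
  rintro D _ hD ⟨A, hA, rfl⟩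
  have hC := hchain.one_le
  have hbd := hchain.ae_kernel_real_mem_Icc k hA
  have hint := (hchain.integrable_kernel_real k hA).integrableOn (s := D)
  rw [hchain.measureReal_inter_preimage_succ hD hA]
  have := hchain.1
  set p := μ.real (X (k + 1) ⁻¹' A)
  have hconst (c : ℝ) : ∫ _ in D, c ∂μ = μ.real D * c := by rw [setIntegral_const, smul_eq_mul]
  have hge := setIntegral_mono_ae (s := D) (integrable_const (C⁻¹ * p)).integrableOn hint
    (hbd.mono fun ω hω => hω.1)
  have hle := setIntegral_mono_ae (s := D) hint (integrable_const (C * p)).integrableOn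
    (hbd.mono fun ω hω => hω.2)
  rw [hconst] at hge hle
  have hCinv : C * C⁻¹ = 1 := mul_inv_cancel₀ (zero_lt_one.trans_le hC).ne'
  have hC2 : 2 ≤ C + C⁻¹ := by nlinarith [sq_nonneg (C - 1)]
  have hnonneg : 0 ≤ μ.real D * p := by positivity
  refine abs_le.2 ⟨?_, ?_⟩ <;> nlinarith

theorem psiMixing_succ (hchain : UEChain μ X κ C) {B : Finset ℕ} {k : ℕ}
    (hB : B ⊆ range (k + 1)) (h : PsiMixing μ (sigmaFinset X B) (sigmaFinset X {k}) ψ) :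
    PsiMixing μ (sigmaFinset X B) (sigmaFinset X {k + 1}) (ψ * (1 - C⁻¹)) := by
  rw [sigmaFinset_singleton X (k + 1)]
  rintro D _ hD ⟨A, hA, rfl⟩
  have hint := hchain.integrable_kernel_real k hA
  have hreal := hchain.measureReal_inter_preimage_succ (sigmaFinset_mono X hB _ hD) hA
  have htotal := hchain.measureReal_inter_preimage_succ (k := k) (D := Set.univ)
    (@MeasurableSet.univ _ (sigmaFinset X _)) hA
  rw [Set.univ_inter, setIntegral_univ] at htotal
  have hbd := hchain.ae_kernel_real_mem_Icc k hA
  obtain ⟨_, hX, _, -, -⟩ := hchain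
  set p := μ.real (X (k + 1) ⁻¹' A)
  -- By ellipticity a fraction `C⁻¹` of the transition is independent of `X k`; only the remaining
  -- part `κ k (X k) A - C⁻¹ p ≥ 0` contributes to the dependence.
  have hφ : StronglyMeasurable[sigmaFinset X {k}] fun ω => (κ k (X k ω)).real A - C⁻¹ * p :=
    ((((κ k).measurable_coe hA).ennreal_toReal.comp
      (measurable_sigmaFinset X (mem_singleton_self k))).sub_const _).stronglyMeasurable
  have := h.abs_setIntegral_sub_le (sigmaFinset_le hX _) hD hφ (hint.sub (integrable_const _))
    (hbd.mono fun ω hω => sub_nonneg.2 hω.1)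
  rw [integral_sub hint (integrable_const _),
    integral_sub hint.integrableOn (integrable_const _).integrableOn, setIntegral_const,
    integral_const, ← hreal, ← htotal] at this
  simp only [probReal_univ, smul_eq_mul, one_mul] at this
  calc _ = _ := by ring_nf
    _ ≤ _ := this
    _ = _ := by ring

theorem psiMixing_range_singleton (hchain : UEChain μ X κ C) (k n : ℕ) :
    PsiMixing μ (sigmaFinset X (range (k + 1))) (sigmaFinset X {k + 1 + n})
      (C * (1 - C⁻¹) ^ (n + 1)) := by
  induction n with
  | zero => simpa using hchain.psiMixing_range_succ k
  | succ n ih =>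
    rw [pow_succ, ← mul_assoc]
    exact hchain.psiMixing_succ (by grind) ih

theorem smul_restrict_inter_preimage_succ (hchain : UEChain μ X κ C) (c : ℝ≥0∞) {k : ℕ}
    {D G : Set Ω} (hD : MeasurableSet[sigmaFinset X (range (k + 1))] D)
    (hG : MeasurableSet[sigmaFinset X (range (k + 1))] G) {A : Set E} (hA : MeasurableSet A) :
    (c • μ.restrict D) (G ∩ X (k + 1) ⁻¹' A)
      = ∫⁻ ω, G.indicator (fun ω => κ k (X k ω) A) ω ∂(c • μ.restrict D) := by
  have hX := hchain.2.1
  have hG' := sigmaFinset_le hX _ _ hG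
  rw [lintegral_smul_measure, lintegral_indicator hG', Measure.restrict_restrict hG',
    Measure.smul_apply, Measure.restrict_apply (hG'.inter (hX _ hA)), Set.inter_right_comm,
    hchain.measure_inter_preimage_succ (hG.inter hD) hA]

theorem smul_restrict_apply_le_of_mem_Icc (hchain : UEChain μ X κ C) {c₁ c₂ : ℝ≥0∞} (hc₁ : c₁ ≠ ∞)
    (hc₂ : c₂ ≠ ∞) {k : ℕ} {D₁ D₂ : Set Ω}
    (hD₁ : MeasurableSet[sigmaFinset X (range (k + 1))] D₁)
    (hD₂ : MeasurableSet[sigmaFinset X (range (k + 1))] D₂)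
    (h : ∀ A, MeasurableSet[sigmaFinset X {k}] A →
      (c₁ • μ.restrict D₁) A ≤ (c₂ • μ.restrict D₂) A) (r : ℕ) :
    ∀ A, MeasurableSet[sigmaFinset X (Icc k (k + r))] A →
      (c₁ • μ.restrict D₁) A ≤ (c₂ • μ.restrict D₂) A := by
  have hX := hchain.2.1
  have := hchain.1
  have := (μ.restrict D₁).smul_finite hc₁
  have := (μ.restrict D₂).smul_finite hc₂
  induction r with
  | zero => rwa [add_zero, Icc_self]
  | succ r ih =>
    have hpast {G : Set Ω} {B : Finset ℕ} (hB : ∀ i ∈ B, i ≤ k + r)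
        (hG : MeasurableSet[sigmaFinset X B] G) :
        MeasurableSet[sigmaFinset X (range (k + r + 1))] G :=
      sigmaFinset_mono X (fun i hi => mem_range_succ_iff.2 (hB i hi)) _ hG
    have hIcc : Icc k (k + (r + 1)) = Icc k (k + r) ∪ {k + r + 1} := by ext; grind
    rw [hIcc, sigmaFinset_union]
    refine (trim_le_trim_iff _).1 (trim_sup_le_trim_sup (sigmaFinset_le hX _) (sigmaFinset_le hX _)
      fun G F hG hF => ?_)
    rw [sigmaFinset_singleton] at hF
    obtain ⟨A, hA, rfl⟩ := hF
    have hG' := hpast (by grind) hG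
    rw [hchain.smul_restrict_inter_preimage_succ c₁ (hpast (by grind) hD₁) hG' hA,
      hchain.smul_restrict_inter_preimage_succ c₂ (hpast (by grind) hD₂) hG' hA]
    refine lintegral_le_of_trim_le_trim ((trim_le_trim_iff (sigmaFinset_le hX _)).2 ih)
      (Measurable.indicator ?_ hG)
    exact ((κ (k + r)).measurable_coe hA).comp (measurable_sigmaFinset X (by grind))

theorem psiMixing_Icc (hchain : UEChain μ X κ C) {B : Finset ℕ} {k : ℕ}
    (hB : B ⊆ range (k + 1)) (h : PsiMixing μ (sigmaFinset X B) (sigmaFinset X {k}) ψ) (r : ℕ) :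
    PsiMixing μ (sigmaFinset X B) (sigmaFinset X (Icc k (k + r))) ψ := by
  have hX := hchain.2.1
  have := hchain.1
  have hψ := h.nonneg
  simp only [psiMixing_iff_trim_le_trim hψ (sigmaFinset_le hX _), trim_le_trim_iff] at h ⊢
  refine fun D hD => ⟨?_, ?_⟩
  · simpa using hchain.smul_restrict_apply_le_of_mem_Icc (c₁ := 1) (D₂ := Set.univ)
      ENNReal.one_ne_top ENNReal.ofReal_ne_top (sigmaFinset_mono X hB _ hD)
      (@MeasurableSet.univ _ (sigmaFinset X _))
      (by simpa using (h D hD).1) r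
  · simpa using hchain.smul_restrict_apply_le_of_mem_Icc (c₂ := 1) (D₁ := Set.univ)
      ENNReal.ofReal_ne_top ENNReal.one_ne_top (@MeasurableSet.univ _ (sigmaFinset X _))
      (sigmaFinset_mono X hB _ hD) (by simpa using (h D hD).2) r

theorem psiMixing_sigmaFinset (hchain : UEChain μ X κ C) {B₁ B₂ : Finset ℕ} {d : ℕ}
    (h : ∀ x ∈ B₁, ∀ y ∈ B₂, x + d < y) :
    PsiMixing μ (sigmaFinset X B₁) (sigmaFinset X B₂) (C * (1 - C⁻¹) ^ (d + 1)) := by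
  have := hchain.1
  rcases B₁.eq_empty_or_nonempty with rfl | hB₁
  · rw [sigmaFinset_empty]
    exact psiMixing_bot_left _ (mul_nonneg (zero_le_one.trans hchain.one_le)
      (pow_nonneg hchain.one_sub_inv_nonneg _))
  have hpast : B₁ ⊆ range (B₁.max' hB₁ + 1) := fun x hx => mem_range_succ_iff.2 (B₁.le_max' x hx)
  have hfuture : B₂ ⊆ Icc (B₁.max' hB₁ + 1 + d) (B₁.max' hB₁ + 1 + d + B₂.sup id) := fun y hy => by
    have hgap := h _ (B₁.max'_mem hB₁) y hy
    have hsup : y ≤ B₂.sup id := le_sup (f := id) hy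
    exact mem_Icc.2 ⟨by lia, by lia⟩
  exact (hchain.psiMixing_Icc (by grind)
    (hchain.psiMixing_range_singleton _ d) _).mono (sigmaFinset_mono X hpast)
    (sigmaFinset_mono X hfuture) le_rfl

theorem psiMixing_sigmaFinset_Icc (hchain : UEChain μ X κ C) {B : Finset ℕ} {s t d : ℕ}
    (hst : s ≤ t) (hB : ∀ x ∈ B, x + d < s ∨ t + d < x) (hd : C * (1 - C⁻¹) ^ (d + 1) ≤ 1 / 2) :
    PsiMixing μ (sigmaFinset X (Icc s t)) (sigmaFinset X B) (8 * (C * (1 - C⁻¹) ^ (d + 1))) := by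
  have := hchain.1
  have hX := hchain.2.1
  rw [← filter_union_filter_not_eq (· + d < s) B, sigmaFinset_union]
  refine PsiMixing.sup_right (sigmaFinset_le hX _) (sigmaFinset_le hX _)
    (hchain.psiMixing_sigmaFinset (by grind)) ?_ hd
  rw [← sigmaFinset_union]
  exact hchain.psiMixing_sigmaFinset (by grind)

theorem ae_abs_condExp_sub_integral_le (hchain : UEChain μ X κ C) {B : Finset ℕ} {s t d : ℕ}
    (hst : s ≤ t) (hB : ∀ x ∈ B, x + d ≤ s ∨ t + d ≤ x) {g : Ω → ℝ} {L : ℝ}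
    (hg : StronglyMeasurable[sigmaFinset X (Icc s t)] g) (hL : ∀ ω, |g ω| ≤ L) :
    ∀ᵐ ω ∂μ, |(μ[g | sigmaFinset X B]) ω - ∫ ω', g ω' ∂μ| ≤ 16 * C * L * (1 - C⁻¹) ^ d := by
  have := hchain.1
  have hX := hchain.2.1
  have hC := hchain.one_le
  by_cases hd : C * (1 - C⁻¹) ^ d ≤ 1 / 2
  · obtain _ | d := d
    · linarith
    filter_upwards [(hchain.psiMixing_sigmaFinset_Icc hst hB hd).ae_abs_condExp_sub_integral_le
      (sigmaFinset_le hX _) (sigmaFinset_le hX _) hg hL] with ω hω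
    linarith
  · have hmean : |∫ ω, g ω ∂μ| ≤ L := by
      simpa using norm_integral_le_of_norm_le_const (μ := μ) (f := g) (ae_of_all _ hL)
    have hL0 := (abs_nonneg _).trans hmean
    filter_upwards [ae_bdd_abs_condExp_of_ae_bdd_abs (m := sigmaFinset X B) (ae_of_all μ hL)]
      with ω hω
    calc _ ≤ |(μ[g | sigmaFinset X B]) ω| + |∫ ω', g ω' ∂μ| := abs_sub _ _
      _ ≤ 16 * L * (1 / 2) := by linarith
      _ ≤ 16 * L * (C * (1 - C⁻¹) ^ d) := by gcongr; exact (not_le.1 hd).le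
      _ = 16 * C * L * (1 - C⁻¹) ^ d := by ring

end UEChain

section CondCov

variable {α : Type*} {m m' m₀ : MeasurableSpace α} {μ : Measure α} {U V : α → ℝ} {L η : ℝ}

/-- The conditional covariance `Cov(U, V | m) = 𝔼[U V | m] - 𝔼[U | m] 𝔼[V | m]`, through which the
conditional variance of a sum is expanded. Its value at `m = ⊥` is the usual covariance. -/
def condCov (μ : Measure α) (m : MeasurableSpace α) (U V : α → ℝ) : α → ℝ :=
  μ[U * V | m] - μ[U | m] * μ[V | m]

theorem condCov_comm (μ : Measure α) (m : MeasurableSpace α) (U V : α → ℝ) :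
    condCov μ m U V = condCov μ m V U := by
  rw [condCov, condCov, mul_comm U V, mul_comm (μ[U | m])]

theorem condVar_bot_eq_variance [IsProbabilityMeasure μ] (hU : MemLp U 2 μ) :
    condVar μ ⊥ U = fun _ => variance U μ := by
  funext x
  rw [variance_eq_sub hU, condVar, condExp_bot, condExp_bot]
  rfl

theorem condVar_sum_ae_eq_sum_condCov {ι : Type*} {Y : ι → α → ℝ} (hY : ∀ i, Integrable (Y i) μ)
    (hYY : ∀ i j, Integrable (Y i * Y j) μ) (s : Finset ι) :
    condVar μ m (∑ i ∈ s, Y i) =ᵐ[μ] ∑ i ∈ s, ∑ j ∈ s, condCov μ m (Y i) (Y j) := by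
  have hsq : (fun x => (∑ i ∈ s, Y i) x ^ 2) = ∑ p ∈ s ×ˢ s, Y p.1 * Y p.2 := by
    funext x
    simp only [sq, Finset.sum_mul_sum, Finset.sum_apply, Pi.mul_apply, Finset.sum_product]
  filter_upwards [condExp_finsetSum (s := s ×ˢ s) (fun p _ => hYY p.1 p.2) m,
    condExp_finsetSum (s := s) (fun i _ => hY i) m] with x hmul hsum
  rw [condVar, hsq, hmul, hsum]
  simp only [Finset.sum_apply, condCov, Finset.sum_product, Finset.sum_sub_distrib, sq,
    Finset.sum_mul_sum, Pi.sub_apply, Pi.mul_apply]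

theorem condCov_condExp_right_ae_eq (hm : m ≤ m') (hm' : m' ≤ m₀) [SigmaFinite (μ.trim hm')]
    (hU : StronglyMeasurable[m'] U) (hV : Integrable V μ) (hUV : Integrable (U * V) μ) :
    condCov μ m U (μ[V | m']) =ᵐ[μ] condCov μ m U V := by
  have hpull : μ[U * μ[V | m'] | m] =ᵐ[μ] μ[U * V | m] :=
    (condExp_congr_ae (condExp_mul_of_stronglyMeasurable_left hU hUV hV).symm).trans
      (condExp_condExp_of_le hm hm')
  exact hpull.sub ((EventuallyEq.refl _ _).mul (condExp_condExp_of_le hm hm'))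

theorem condCov_sub_const_right_ae_eq [IsFiniteMeasure μ] (hm : m ≤ m₀) (hU : Integrable U μ)
    (hV : Integrable V μ) (hUV : Integrable (U * V) μ) (c : ℝ) :
    condCov μ m U (V - fun _ => c) =ᵐ[μ] condCov μ m U V := by
  have hmul : U * (V - fun _ => c) = U * V - c • U := by
    ext x
    simp only [Pi.mul_apply, Pi.sub_apply, Pi.smul_apply, smul_eq_mul]
    ring
  rw [condCov, condCov, hmul]
  filter_upwards [condExp_sub hUV (hU.smul c) m, condExp_smul (μ := μ) c U m,
    condExp_sub hV (integrable_const c) m] with x hUVx hUx hVx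
  simp only [Pi.sub_apply, Pi.mul_apply, hUVx, hUx, hVx, Pi.smul_apply, smul_eq_mul,
    condExp_const hm]
  ring

theorem ae_abs_condCov_le (hU : ∀ᵐ x ∂μ, |U x| ≤ L) (hV : ∀ᵐ x ∂μ, |V x| ≤ η) :
    ∀ᵐ x ∂μ, |condCov μ m U V x| ≤ 2 * L * η := by
  have hUV : ∀ᵐ x ∂μ, |(U * V) x| ≤ L * η := by
    filter_upwards [hU, hV] with x hUx hVx
    rw [Pi.mul_apply, abs_mul]
    exact mul_le_mul hUx hVx (abs_nonneg _) ((abs_nonneg _).trans hUx)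
  filter_upwards [ae_bdd_abs_condExp_of_ae_bdd_abs (m := m) hU,
    ae_bdd_abs_condExp_of_ae_bdd_abs (m := m) hV,
    ae_bdd_abs_condExp_of_ae_bdd_abs (m := m) hUV] with x hUx hVx hUVx
  calc |condCov μ m U V x| ≤ |(μ[U * V | m]) x| + |(μ[U | m]) x * (μ[V | m]) x| := abs_sub _ _
    _ ≤ L * η + L * η := by
      rw [abs_mul]
      exact add_le_add hUVx (mul_le_mul hUx hVx (abs_nonneg _) ((abs_nonneg _).trans hUx))
    _ = 2 * L * η := by ring

theorem ae_abs_condCov_le_of_ae_abs_condExp_sub_le [IsFiniteMeasure μ] (hm : m ≤ m')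
    (hm' : m' ≤ m₀) (hU : StronglyMeasurable[m'] U) (hL : ∀ x, |U x| ≤ L) (hV : Integrable V μ)
    {c : ℝ} (hη : ∀ᵐ x ∂μ, |(μ[V | m']) x - c| ≤ η) :
    ∀ᵐ x ∂μ, |condCov μ m U V x| ≤ 2 * L * η := by
  have hU' := (hU.mono hm').aestronglyMeasurable (μ := μ)
  filter_upwards [ae_abs_condCov_le (m := m) (ae_of_all μ hL) hη,
    condCov_condExp_right_ae_eq hm hm' hU hV (hV.bdd_mul hU' (ae_of_all _ hL)),
    condCov_sub_const_right_ae_eq (hm.trans hm') (.of_bound hU' L (ae_of_all _ hL))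
      integrable_condExp (integrable_condExp.bdd_mul hU' (ae_of_all _ hL)) c] with x hx h₁ h₂
  rw [← h₁, ← h₂]
  exact hx

theorem ae_abs_condCov_sub_condCov_bot_le [IsProbabilityMeasure μ] (hU : ∀ᵐ x ∂μ, |U x| ≤ L)
    (hV : ∀ x, |V x| ≤ L) (hU' : ∀ᵐ x ∂μ, |(μ[U | m]) x - ∫ y, U y ∂μ| ≤ η * L)
    (hV' : ∀ᵐ x ∂μ, |(μ[V | m]) x - ∫ y, V y ∂μ| ≤ η * L)
    (hUV : ∀ᵐ x ∂μ, |(μ[U * V | m]) x - ∫ y, (U * V) y ∂μ| ≤ η * L ^ 2) :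
    ∀ᵐ x ∂μ, |condCov μ m U V x - condCov μ ⊥ U V x| ≤ 3 * η * L ^ 2 := by
  have hmean : |∫ y, V y ∂μ| ≤ L := by
    simpa using norm_integral_le_of_norm_le_const (μ := μ) (f := V) (ae_of_all _ hV)
  have hL := (abs_nonneg _).trans hmean
  filter_upwards [ae_bdd_abs_condExp_of_ae_bdd_abs (m := m) hU, hU', hV', hUV]
    with x hUx hUx' hVx' hUVx
  simp only [condCov, condExp_bot, Pi.sub_apply, Pi.mul_apply] at hUVx ⊢
  have hmul : |(μ[U | m]) x * (μ[V | m]) x - (∫ y, U y ∂μ) * ∫ y, V y ∂μ| ≤ 2 * η * L ^ 2 := by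
    calc _ = |(μ[U | m]) x * ((μ[V | m]) x - ∫ y, V y ∂μ)
            + ((μ[U | m]) x - ∫ y, U y ∂μ) * ∫ y, V y ∂μ| := by ring_nf
      _ ≤ L * (η * L) + η * L * L := by
        refine (abs_add_le _ _).trans ?_
        rw [abs_mul, abs_mul]
        gcongr
        exact (abs_nonneg _).trans hUx'
      _ = _ := by ring
  calc _ = |((μ[U * V | m]) x - ∫ y, U y * V y ∂μ)
          - ((μ[U | m]) x * (μ[V | m]) x - (∫ y, U y ∂μ) * ∫ y, V y ∂μ)| := by ring_nf
    _ ≤ η * L ^ 2 + 2 * η * L ^ 2 := (abs_sub _ _).trans (add_le_add hUVx hmul)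
    _ = 3 * η * L ^ 2 := by ring

end CondCov

-- The median of `a`, `b`, `g` is at least half the sum of the two smallest.
theorem sq_pow_median_le {θ : ℝ} (h0 : 0 ≤ θ) (h1 : θ ≤ 1) (a b g : ℕ) :
    (θ ^ 2) ^ max (min a b) (max (min a g) (min b g))
      ≤ θ ^ (a + b) + θ ^ (a + g) + θ ^ (b + g) := by
  obtain ⟨e, he⟩ : ∃ e, e = max (min a b) (max (min a g) (min b g)) := ⟨_, rfl⟩
  rw [← he, ← pow_mul]
  have hle {n : ℕ} (hn : n ≤ 2 * e) : θ ^ (2 * e) ≤ θ ^ n := pow_le_pow_of_le_one h0 h1 hn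
  have hnonneg (n : ℕ) : 0 ≤ θ ^ n := pow_nonneg h0 n
  have hcases : a + b ≤ 2 * e ∨ a + g ≤ 2 * e ∨ b + g ≤ 2 * e := by lia
  rcases hcases with h | h | h <;>
    linarith [hle h, hnonneg (a + b), hnonneg (a + g), hnonneg (b + g)]

namespace UEChain

variable {μ : Measure Ω} {X : ℕ → Ω → E} {κ : ℕ → Kernel E E} {C L : ℝ} {U V : Ω → ℝ} {i j e : ℕ}

theorem ae_abs_condCov_le (hchain : UEChain μ X κ C)
    (hU : StronglyMeasurable[sigmaFinset X {i}] U) (hUL : ∀ ω, |U ω| ≤ L)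
    (hV : StronglyMeasurable[sigmaFinset X {j}] V) (hVL : ∀ ω, |V ω| ≤ L) {B : Finset ℕ}
    (hij : i + e ≤ j ∨ j + e ≤ i) (hjB : ∀ x ∈ B, x + e ≤ j ∨ j + e ≤ x) :
    ∀ᵐ ω ∂μ, |condCov μ (sigmaFinset X B) U V ω| ≤ 32 * C * L ^ 2 * (1 - C⁻¹) ^ e := by
  have := hchain.1
  have hX := hchain.2.1
  have hVint : Integrable V μ := .of_bound (hV.mono (sigmaFinset_le hX _)).aestronglyMeasurable L
    (ae_of_all _ hVL)
  have hfar : ∀ x ∈ insert i B, x + e ≤ j ∨ j + e ≤ x := by grind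
  filter_upwards [ae_abs_condCov_le_of_ae_abs_condExp_sub_le
    (sigmaFinset_mono X (subset_insert i B)) (sigmaFinset_le hX _)
    (hU.mono (sigmaFinset_mono X (by simp))) hUL hVint
    (hchain.ae_abs_condExp_sub_integral_le le_rfl hfar (by rwa [Icc_self]) hVL)] with ω hω
  exact hω.trans_eq (by ring)

theorem ae_abs_condCov_sub_condCov_bot_le_of_gap (hchain : UEChain μ X κ C)
    (hU : StronglyMeasurable[sigmaFinset X {i}] U) (hUL : ∀ ω, |U ω| ≤ L)
    (hV : StronglyMeasurable[sigmaFinset X {j}] V) (hVL : ∀ ω, |V ω| ≤ L) {B : Finset ℕ}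
    (hij : i + e ≤ j ∨ j + e ≤ i) (hjB : ∀ x ∈ B, x + e ≤ j ∨ j + e ≤ x) :
    ∀ᵐ ω ∂μ, |condCov μ (sigmaFinset X B) U V ω - condCov μ ⊥ U V ω|
      ≤ 64 * C * L ^ 2 * (1 - C⁻¹) ^ e := by
  filter_upwards [hchain.ae_abs_condCov_le hU hUL hV hVL hij hjB,
    hchain.ae_abs_condCov_le hU hUL hV hVL (B := ∅) hij (by simp)] with ω hB hbot
  rw [sigmaFinset_empty] at hbot
  exact (abs_sub _ _).trans (by linarith)

theorem ae_abs_condCov_sub_condCov_bot_le_of_dist (hchain : UEChain μ X κ C)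
    (hU : StronglyMeasurable[sigmaFinset X {i}] U) (hUL : ∀ ω, |U ω| ≤ L)
    (hV : StronglyMeasurable[sigmaFinset X {j}] V) (hVL : ∀ ω, |V ω| ≤ L) (hle : i ≤ j)
    {B : Finset ℕ} (hiB : ∀ x ∈ B, x + e ≤ i ∨ i + e ≤ x)
    (hjB : ∀ x ∈ B, x + e ≤ j ∨ j + e ≤ x) :
    ∀ᵐ ω ∂μ, |condCov μ (sigmaFinset X B) U V ω - condCov μ ⊥ U V ω|
      ≤ 64 * C * L ^ 2 * (1 - C⁻¹) ^ e := by
  by_cases hbetween : ∃ x ∈ B, i + e ≤ x ∧ x + e ≤ j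
  · exact hchain.ae_abs_condCov_sub_condCov_bot_le_of_gap hU hUL hV hVL (by grind) hjB
  have := hchain.1
  have hC : 0 ≤ C := zero_le_one.trans hchain.one_le
  have hδ := hchain.one_sub_inv_nonneg
  have hUV : StronglyMeasurable[sigmaFinset X (Icc i j)] (U * V) :=
    (hU.mono (sigmaFinset_mono X (by grind))).mul (hV.mono (sigmaFinset_mono X (by grind)))
  have hUVL : ∀ ω, |(U * V) ω| ≤ L ^ 2 := fun ω => by
    rw [Pi.mul_apply, abs_mul, sq]
    exact mul_le_mul (hUL ω) (hVL ω) (abs_nonneg _) ((abs_nonneg _).trans (hUL ω))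
  filter_upwards [EdgeworthMC.ae_abs_condCov_sub_condCov_bot_le (m := sigmaFinset X B)
    (η := 16 * C * (1 - C⁻¹) ^ e) (ae_of_all μ hUL) hVL
    ((hchain.ae_abs_condExp_sub_integral_le le_rfl hiB (by rwa [Icc_self]) hUL).mono
      fun ω hω => hω.trans_eq (by ring))
    ((hchain.ae_abs_condExp_sub_integral_le le_rfl hjB (by rwa [Icc_self]) hVL).mono
      fun ω hω => hω.trans_eq (by ring))
    ((hchain.ae_abs_condExp_sub_integral_le (d := e) hle (by grind) hUV hUVL).mono
      fun ω hω => hω.trans_eq (by ring))] with ω hω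
  have : 0 ≤ C * L ^ 2 * (1 - C⁻¹) ^ e := by positivity
  linarith

theorem ae_abs_condCov_sub_condCov_bot_le (hchain : UEChain μ X κ C)
    (hU : StronglyMeasurable[sigmaFinset X {i}] U) (hUL : ∀ ω, |U ω| ≤ L)
    (hV : StronglyMeasurable[sigmaFinset X {j}] V) (hVL : ∀ ω, |V ω| ≤ L) {B : Finset ℕ}
    {a b g : ℕ} (ha : ∀ x ∈ B, x + a ≤ i ∨ i + a ≤ x) (hb : ∀ x ∈ B, x + b ≤ j ∨ j + b ≤ x)
    (hg : i + g ≤ j ∨ j + g ≤ i) :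
    ∀ᵐ ω ∂μ, |condCov μ (sigmaFinset X B) U V ω - condCov μ ⊥ U V ω|
      ≤ 64 * C * L ^ 2 * (√(1 - C⁻¹) ^ (a + b) + √(1 - C⁻¹) ^ (a + g) + √(1 - C⁻¹) ^ (b + g)) := by
  have hC : 0 ≤ C := zero_le_one.trans hchain.one_le
  have hθ0 : 0 ≤ √(1 - C⁻¹) := Real.sqrt_nonneg _
  have hθ1 : √(1 - C⁻¹) ≤ 1 := Real.sqrt_le_one.2 hchain.one_sub_inv_lt_one.le
  obtain ⟨e, he⟩ : ∃ e, e = max (min a b) (max (min a g) (min b g)) := ⟨_, rfl⟩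
  have hbound : ∀ᵐ ω ∂μ, |condCov μ (sigmaFinset X B) U V ω - condCov μ ⊥ U V ω|
      ≤ 64 * C * L ^ 2 * (1 - C⁻¹) ^ e := by
    have hcases : (e ≤ g ∧ e ≤ b) ∨ (e ≤ g ∧ e ≤ a) ∨ (e ≤ a ∧ e ≤ b) := by lia
    rcases hcases with ⟨heg, heb⟩ | ⟨heg, hea⟩ | ⟨hea, heb⟩
    · exact hchain.ae_abs_condCov_sub_condCov_bot_le_of_gap hU hUL hV hVL (by lia) (by grind)
    · simp only [condCov_comm μ _ U V]
      exact hchain.ae_abs_condCov_sub_condCov_bot_le_of_gap hV hVL hU hUL (by lia) (by grind)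
    rcases le_total i j with hle | hle
    · exact hchain.ae_abs_condCov_sub_condCov_bot_le_of_dist hU hUL hV hVL hle (by grind)
        (by grind)
    · simp only [condCov_comm μ _ U V]
      exact hchain.ae_abs_condCov_sub_condCov_bot_le_of_dist hV hVL hU hUL hle (by grind)
        (by grind)
  have hpow := sq_pow_median_le hθ0 hθ1 a b g
  rw [Real.sq_sqrt hchain.one_sub_inv_nonneg, ← he] at hpow
  filter_upwards [hbound] with ω hω
  exact hω.trans (by gcongr)

end UEChain

section DistanceSums

variable {θ : ℝ}

theorem sum_pow_natAbs_sub_le (h0 : 0 ≤ θ) (h1 : θ < 1) (s : Finset ℕ) (x : ℕ) :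
    ∑ i ∈ s, θ ^ ((i : ℤ) - x).natAbs ≤ 2 * (1 - θ)⁻¹ := by
  have hside (t : Finset ℕ) (ht : Set.InjOn (fun i : ℕ => ((i : ℤ) - x).natAbs) t) :
      ∑ i ∈ t, θ ^ ((i : ℤ) - x).natAbs ≤ (1 - θ)⁻¹ := by
    rw [← Finset.sum_image (f := fun n => θ ^ n) ht, ← tsum_geometric_of_lt_one h0 h1]
    exact (summable_geometric_of_lt_one h0 h1).sum_le_tsum _ fun n _ => pow_nonneg h0 n
  rw [← Finset.sum_filter_add_sum_filter_not s (fun i => i ≤ x), two_mul]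
  refine add_le_add (hside _ ?_) (hside _ ?_) <;>
  · intro i hi j hj hij
    rw [mem_coe, mem_filter] at hi hj
    lia

theorem exists_dist_sum_pow_le (h0 : 0 ≤ θ) (h1 : θ < 1) {B : Finset ℕ} (hB : B.Nonempty)
    (s : Finset ℕ) :
    ∃ d : ℕ → ℕ, (∀ i, ∀ x ∈ B, x + d i ≤ i ∨ i + d i ≤ x) ∧
      ∑ i ∈ s, θ ^ d i ≤ 2 * (1 - θ)⁻¹ * #B := by
  choose k hk hmin using fun i : ℕ => B.exists_min_image (fun x : ℕ => ((i : ℤ) - x).natAbs) hB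
  refine ⟨fun i => ((i : ℤ) - k i).natAbs, fun i x hx => by have := hmin i x hx; lia, ?_⟩
  calc ∑ i ∈ s, θ ^ ((i : ℤ) - k i).natAbs
      ≤ ∑ i ∈ s, ∑ x ∈ B, θ ^ ((i : ℤ) - x).natAbs := sum_le_sum fun i _ =>
        single_le_sum (f := fun x : ℕ => θ ^ ((i : ℤ) - x).natAbs) (fun x _ => pow_nonneg h0 _)
          (hk i)
    _ = ∑ x ∈ B, ∑ i ∈ s, θ ^ ((i : ℤ) - x).natAbs := sum_comm
    _ ≤ ∑ x ∈ B, 2 * (1 - θ)⁻¹ := sum_le_sum fun x _ => sum_pow_natAbs_sub_le h0 h1 s x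
    _ = 2 * (1 - θ)⁻¹ * #B := by rw [sum_const, nsmul_eq_mul, mul_comm]

theorem sum_sum_pow_add_natAbs_sub_le (h0 : 0 ≤ θ) (h1 : θ < 1) (s : Finset ℕ) (d : ℕ → ℕ) :
    ∑ i ∈ s, ∑ j ∈ s, θ ^ (d i + ((i : ℤ) - j).natAbs) ≤ 2 * (1 - θ)⁻¹ * ∑ i ∈ s, θ ^ d i := by
  rw [mul_sum]
  refine sum_le_sum fun i _ => ?_
  have hcomm (j : ℕ) : ((i : ℤ) - j).natAbs = ((j : ℤ) - i).natAbs := by lia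
  simp only [pow_add, ← mul_sum, hcomm]
  rw [mul_comm]
  gcongr
  exact sum_pow_natAbs_sub_le h0 h1 s i

theorem sum_sum_pow_pairs_le (h0 : 0 ≤ θ) (h1 : θ < 1) (s : Finset ℕ) (d : ℕ → ℕ) :
    ∑ i ∈ s, ∑ j ∈ s, (θ ^ (d i + d j) + θ ^ (d i + ((i : ℤ) - j).natAbs)
        + θ ^ (d j + ((i : ℤ) - j).natAbs))
      ≤ (∑ i ∈ s, θ ^ d i) ^ 2 + 2 * (2 * (1 - θ)⁻¹ * ∑ i ∈ s, θ ^ d i) := by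
  have hleft := sum_sum_pow_add_natAbs_sub_le h0 h1 s d
  have hright : ∑ i ∈ s, ∑ j ∈ s, θ ^ (d j + ((i : ℤ) - j).natAbs)
      ≤ 2 * (1 - θ)⁻¹ * ∑ i ∈ s, θ ^ d i := by
    have hcomm (i j : ℕ) : ((i : ℤ) - j).natAbs = ((j : ℤ) - i).natAbs := by lia
    rw [sum_comm]
    simpa only [hcomm] using hleft
  have hprod : ∑ i ∈ s, ∑ j ∈ s, θ ^ (d i + d j) = (∑ i ∈ s, θ ^ d i) ^ 2 := by
    simp only [sq, sum_mul_sum, pow_add]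
  simp only [sum_add_distrib]
  linarith

end DistanceSums

namespace UEChain

variable {μ : Measure Ω} {X : ℕ → Ω → E} {κ : ℕ → Kernel E E} {C L : ℝ} {Y : ℕ → Ω → ℝ}

theorem ae_abs_condExp_sum_sub_integral_le (hchain : UEChain μ X κ C)
    (hY : ∀ n, StronglyMeasurable[sigmaFinset X {n}] (Y n)) (hL : ∀ n ω, |Y n ω| ≤ L)
    (B s : Finset ℕ) :
    ∀ᵐ ω ∂μ, |(μ[∑ n ∈ s, Y n | sigmaFinset X B]) ω - ∫ ω', (∑ n ∈ s, Y n) ω' ∂μ|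
      ≤ 32 * C ^ 2 * L * #B := by
  have := hchain.1
  rcases B.eq_empty_or_nonempty with rfl | hB
  · rw [sigmaFinset_empty, condExp_bot]
    simp
  have hint (n : ℕ) : Integrable (Y n) μ :=
    .of_bound ((hY n).mono (sigmaFinset_le hchain.2.1 _)).aestronglyMeasurable L
      (ae_of_all _ (hL n))
  have hC : 0 ≤ C := zero_le_one.trans hchain.one_le
  obtain ⟨ω₀⟩ : Nonempty Ω := nonempty_of_isProbabilityMeasure μ
  have hL0 : 0 ≤ L := (abs_nonneg _).trans (hL 0 ω₀)
  obtain ⟨d, hd, hsum⟩ :=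
    exists_dist_sum_pow_le hchain.one_sub_inv_nonneg hchain.one_sub_inv_lt_one hB s
  rw [sub_sub_cancel, inv_inv] at hsum
  have hterm : ∀ᵐ ω ∂μ, ∀ i, |(μ[Y i | sigmaFinset X B]) ω - ∫ ω', Y i ω' ∂μ|
      ≤ 16 * C * L * (1 - C⁻¹) ^ d i :=
    ae_all_iff.2 fun i =>
      hchain.ae_abs_condExp_sub_integral_le le_rfl (hd i) (by rw [Icc_self]; exact hY i) (hL i)
  filter_upwards [hterm, condExp_finsetSum (s := s) (fun n _ => hint n) (sigmaFinset X B)]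
    with ω hterm hcond
  simp only [hcond, Finset.sum_apply, integral_finsetSum s fun n _ => hint n]
  rw [← sum_sub_distrib]
  calc |∑ i ∈ s, ((μ[Y i | sigmaFinset X B]) ω - ∫ ω', Y i ω' ∂μ)|
      ≤ ∑ i ∈ s, |(μ[Y i | sigmaFinset X B]) ω - ∫ ω', Y i ω' ∂μ| := abs_sum_le_sum_abs _ _
    _ ≤ ∑ i ∈ s, 16 * C * L * (1 - C⁻¹) ^ d i := sum_le_sum fun i _ => hterm i
    _ = 16 * C * L * ∑ i ∈ s, (1 - C⁻¹) ^ d i := (mul_sum _ _ _).symm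
    _ ≤ 16 * C * L * (2 * C * #B) := by gcongr
    _ = 32 * C ^ 2 * L * #B := by ring

theorem ae_abs_condVar_sum_sub_le_sum_abs (hchain : UEChain μ X κ C)
    (hY : ∀ n, StronglyMeasurable[sigmaFinset X {n}] (Y n)) (hL : ∀ n ω, |Y n ω| ≤ L)
    (B s : Finset ℕ) :
    ∀ᵐ ω ∂μ, |condVar μ (sigmaFinset X B) (∑ n ∈ s, Y n) ω - variance (∑ n ∈ s, Y n) μ|
      ≤ ∑ i ∈ s, ∑ j ∈ s,
        |condCov μ (sigmaFinset X B) (Y i) (Y j) ω - condCov μ ⊥ (Y i) (Y j) ω| := by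
  have := hchain.1
  have hmeas (n : ℕ) : AEStronglyMeasurable (Y n) μ :=
    ((hY n).mono (sigmaFinset_le hchain.2.1 _)).aestronglyMeasurable
  have hint (n : ℕ) : Integrable (Y n) μ := .of_bound (hmeas n) L (ae_of_all _ (hL n))
  have hint₂ (i j : ℕ) : Integrable (Y i * Y j) μ :=
    (hint j).bdd_mul (hmeas i) (ae_of_all _ (hL i))
  have hmem : MemLp (∑ n ∈ s, Y n) 2 μ :=
    memLp_finsetSum' s fun n _ => .of_bound (hmeas n) L (ae_of_all _ (hL n))
  filter_upwards [condVar_sum_ae_eq_sum_condCov (m := sigmaFinset X B) hint hint₂ s,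
    condVar_sum_ae_eq_sum_condCov (m := ⊥) hint hint₂ s] with ω hB hbot
  rw [hB, ← congrFun (condVar_bot_eq_variance hmem) ω, hbot]
  simp only [Finset.sum_apply, ← sum_sub_distrib]
  exact (abs_sum_le_sum_abs _ _).trans (sum_le_sum fun i _ => abs_sum_le_sum_abs _ _)

theorem ae_abs_condVar_sum_sub_variance_le (hchain : UEChain μ X κ C)
    (hY : ∀ n, StronglyMeasurable[sigmaFinset X {n}] (Y n)) (hL : ∀ n ω, |Y n ω| ≤ L)
    (B s : Finset ℕ) :
    ∀ᵐ ω ∂μ, |condVar μ (sigmaFinset X B) (∑ n ∈ s, Y n) ω - variance (∑ n ∈ s, Y n) μ|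
      ≤ 64 * C * L ^ 2 * (3 * (2 * (1 - √(1 - C⁻¹))⁻¹) ^ 2) * #B ^ 2 := by
  have hexpand := hchain.ae_abs_condVar_sum_sub_le_sum_abs hY hL B s
  rcases B.eq_empty_or_nonempty with rfl | hB
  · filter_upwards [hexpand] with ω hω
    simpa [sigmaFinset_empty] using hω
  have hC : 0 ≤ C := zero_le_one.trans hchain.one_le
  have hcard : (1 : ℝ) ≤ #B := by exact_mod_cast hB.card_pos
  set θ := √(1 - C⁻¹)
  have hθ0 : 0 ≤ θ := Real.sqrt_nonneg _
  have hθ1 : θ < 1 := (Real.sqrt_lt' one_pos).2 (by simpa using hchain.one_sub_inv_lt_one)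
  obtain ⟨d, hd, hsum⟩ := exists_dist_sum_pow_le hθ0 hθ1 hB s
  set Γ := 2 * (1 - θ)⁻¹
  have : 0 ≤ Γ := mul_nonneg zero_le_two (inv_nonneg.2 (sub_nonneg.2 hθ1.le))
  have hterm : ∀ᵐ ω ∂μ, ∀ i j : ℕ,
      |condCov μ (sigmaFinset X B) (Y i) (Y j) ω - condCov μ ⊥ (Y i) (Y j) ω|
        ≤ 64 * C * L ^ 2 * (θ ^ (d i + d j) + θ ^ (d i + ((i : ℤ) - j).natAbs)
          + θ ^ (d j + ((i : ℤ) - j).natAbs)) :=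
    ae_all_iff.2 fun i => ae_all_iff.2 fun j => hchain.ae_abs_condCov_sub_condCov_bot_le
      (hY i) (hL i) (hY j) (hL j) (hd i) (hd j) (by lia)
  filter_upwards [hexpand, hterm] with ω hexpand hterm
  refine hexpand.trans ((sum_le_sum fun i _ => sum_le_sum fun j _ => hterm i j).trans ?_)
  simp only [← mul_sum]
  rw [mul_assoc (64 * C * L ^ 2)]
  gcongr
  calc _ ≤ (∑ i ∈ s, θ ^ d i) ^ 2 + 2 * (Γ * ∑ i ∈ s, θ ^ d i) :=
        sum_sum_pow_pairs_le hθ0 hθ1 s d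
    _ ≤ (Γ * #B) ^ 2 + 2 * (Γ * (Γ * #B)) := by gcongr
    _ = Γ ^ 2 * (#B ^ 2 + 2 * (1 * #B)) := by ring
    _ ≤ Γ ^ 2 * (#B ^ 2 + 2 * (#B * #B)) := by gcongr
    _ = 3 * Γ ^ 2 * #B ^ 2 := by ring

theorem exists_ae_abs_condExp_sub_le_and_abs_condVar_sub_le (hchain : UEChain μ X κ C)
    {f : ℕ → E → ℤ} (hf : ∀ n, Measurable (f n)) {K : ℕ}
    (hbound : ∀ n ω, |f n (X n ω)| ≤ (K : ℤ)) :
    ∃ c : ℝ, 0 < c ∧ ∀ (B : Finset ℕ) (N : ℕ), ∀ᵐ ω ∂μ,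
      |(μ[fun ω' => (S X f N ω' : ℝ) | sigmaFinset X B]) ω - meanS μ X f N| ≤ c * #B ∧
      |condVar μ (sigmaFinset X B) (fun ω' => (S X f N ω' : ℝ)) ω - VN μ X f N|
        ≤ c * #B ^ 2 := by
  obtain ⟨Y, hYf⟩ : ∃ Y : ℕ → Ω → ℝ, Y = fun n ω => (f n (X n ω) : ℝ) := ⟨_, rfl⟩
  have hY (n : ℕ) : StronglyMeasurable[sigmaFinset X {n}] (Y n) := by
    rw [hYf]
    exact ((measurable_from_top.comp (hf n)).comp
      (measurable_sigmaFinset X (mem_singleton_self n))).stronglyMeasurable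
  have hYK (n : ℕ) (ω : Ω) : |Y n ω| ≤ K := by
    simp only [hYf]
    exact_mod_cast hbound n ω
  have hS (N : ℕ) : (fun ω => (S X f N ω : ℝ)) = ∑ n ∈ Icc 1 N, Y n := by
    funext ω
    simp [S, hYf]
  refine ⟨max 1 (max (32 * C ^ 2 * K) (64 * C * K ^ 2 * (3 * (2 * (1 - √(1 - C⁻¹))⁻¹) ^ 2))),
    lt_max_of_lt_left one_pos, fun B N => ?_⟩
  simp only [meanS, VN, hS]
  filter_upwards [hchain.ae_abs_condExp_sum_sub_integral_le hY hYK B (Icc 1 N),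
    hchain.ae_abs_condVar_sum_sub_variance_le hY hYK B (Icc 1 N)] with ω hmean hvar
  refine ⟨hmean.trans ?_, hvar.trans ?_⟩
  · gcongr
    exact (le_max_left _ _).trans (le_max_right _ _)
  · gcongr
    exact (le_max_right _ _).trans (le_max_right _ _)

end UEChain

theorem qres_nonneg {F : Type*} (μ : Measure Ω) (X : ℕ → Ω → F) (f : ℕ → F → ℤ) (n m : ℕ) :
    0 ≤ qres μ X f n m := by
  refine Real.iInf_nonneg fun j => Real.sSup_nonneg ?_
  rintro _ ⟨i, -, rfl⟩
  exact ENNReal.toReal_nonneg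

theorem card_bigSet_le {F : Type*} (μ : Measure Ω) (X : ℕ → Ω → F) (f : ℕ → F → ℤ) (m N : ℕ)
    {ε b : ℝ} (hε : 0 < ε) (hb : ∑ n ∈ Icc 1 N, qres μ X f n m ≤ b) :
    (#(bigSet μ X f m N ε) : ℝ) ≤ b / ε := by
  rw [le_div_iff₀ hε, ← nsmul_eq_mul]
  calc #(bigSet μ X f m N ε) • ε ≤ ∑ n ∈ bigSet μ X f m N ε, qres μ X f n m :=
        card_nsmul_le_sum _ _ _ fun n hn => (mem_filter.1 hn).2
    _ ≤ ∑ n ∈ Icc 1 N, qres μ X f n m :=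
        sum_le_sum_of_subset_of_nonneg (filter_subset _ _) fun n _ _ => qres_nonneg μ X f n m
    _ ≤ b := hb

theorem conditional_mean_variance_estimates_general
    (μ : Measure Ω) (X : ℕ → Ω → E) (κ : ℕ → Kernel E E) (f : ℕ → E → ℤ)
    (C : ℝ) (K m : ℕ) (hm : 2 ≤ m) (hchain : UEChain μ X κ C) (hf : ∀ n, Measurable (f n))
    (hbound : ∀ n ω, |f n (X n ω)| ≤ (K : ℤ)) (R εbar : ℝ) (hε : 0 < εbar) :
    ∃ C' : ℝ, 0 < C' ∧
      ∀ (N : ℕ) (ℓ : ℝ),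
        (∑ n ∈ Finset.Icc 1 N, qres μ X f n m) ≤ R * ℓ →
        (((bigSet μ X f m N εbar).card : ℝ) ≤ R * ℓ / εbar) ∧
        ∀ᵐ ω ∂μ,
          |(μ[fun ω' => ((S X f N ω' : ℝ)) | sigmaFinset X (bigSet μ X f m N εbar)]) ω -
              meanS μ X f N| ≤ C' * ((bigSet μ X f m N εbar).card : ℝ) ∧
          C' * ((bigSet μ X f m N εbar).card : ℝ) ≤ C' * (R * ℓ / εbar) ∧
          |condVar μ (sigmaFinset X (bigSet μ X f m N εbar))
              (fun ω' => ((S X f N ω' : ℝ))) ω - VN μ X f N| ≤ C' * ℓ ^ 2 := by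
  obtain ⟨c, hc, hest⟩ := hchain.exists_ae_abs_condExp_sub_le_and_abs_condVar_sub_le hf hbound
  refine ⟨c * max 1 ((R / εbar) ^ 2), by positivity, fun N ℓ hN => ?_⟩
  have hcard := card_bigSet_le μ X f m N hε hN
  refine ⟨hcard, ?_⟩
  filter_upwards [hest (bigSet μ X f m N εbar) N] with ω ⟨hmean, hvar⟩
  refine ⟨hmean.trans ?_, by gcongr, hvar.trans ?_⟩
  · gcongr
    exact le_mul_of_one_le_right hc.le (le_max_left _ _)
  · calc c * (#(bigSet μ X f m N εbar) : ℝ) ^ 2 ≤ c * (R * ℓ / εbar) ^ 2 := by gcongr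
      _ = c * (R / εbar) ^ 2 * ℓ ^ 2 := by ring
      _ ≤ c * max 1 ((R / εbar) ^ 2) * ℓ ^ 2 := by gcongr; exact le_max_right _ _

/-- Lemma 5.1. Suppose `∑_{n=1}^N q_n(m) ≤ R ln V_N`, fix `εbar > 0`, let
`𝓑 = {1 ≤ n ≤ N : q_n(m) ≥ εbar}` (so `N₀ = |𝓑| ≤ R ln V_N / εbar`) and `𝓔 = σ(X_n : n ∈ 𝓑)`.
Then, for a constant `C'` independent of `N`, almost surely
`|𝔼(S_N|𝓔) - 𝔼(S_N)| ≤ C' N₀ ≤ C' R ln V_N / εbar` and `|Var(S_N|𝓔) - V_N| ≤ C' ln² V_N`. -/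
theorem conditional_mean_variance_estimates
    (μ : Measure Ω) (X : ℕ → Ω → E) (κ : ℕ → Kernel E E) (f : ℕ → E → ℤ)
    (C : ℝ) (K m : ℕ) (hC : 1 < C) (hK : 1 ≤ K) (hm : 2 ≤ m) (hmK : m ≤ 2 * K)
    (hchain : UEChain μ X κ C) (hf : ∀ n, Measurable (f n))
    (hbound : ∀ n ω, |f n (X n ω)| ≤ (K : ℤ))
    (hV : Tendsto (fun N => VN μ X f N) atTop atTop)
    (R εbar : ℝ) (hR : 0 < R) (hε : 0 < εbar) :
    ∃ C' : ℝ, 0 < C' ∧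
      ∀ N : ℕ,
        (∑ n ∈ Finset.Icc 1 N, qres μ X f n m) ≤ R * Real.log (VN μ X f N) →
        (((bigSet μ X f m N εbar).card : ℝ) ≤ R * Real.log (VN μ X f N) / εbar) ∧
        ∀ᵐ ω ∂μ,
          |(μ[fun ω' => ((S X f N ω' : ℝ)) | sigmaFinset X (bigSet μ X f m N εbar)]) ω -
              meanS μ X f N| ≤ C' * ((bigSet μ X f m N εbar).card : ℝ) ∧
          C' * ((bigSet μ X f m N εbar).card : ℝ) ≤ C' * (R * Real.log (VN μ X f N) / εbar) ∧
          |condVar μ (sigmaFinset X (bigSet μ X f m N εbar))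
              (fun ω' => ((S X f N ω' : ℝ))) ω - VN μ X f N|
            ≤ C' * (Real.log (VN μ X f N)) ^ 2 := by
  obtain ⟨C', hC', hest⟩ :=
    conditional_mean_variance_estimates_general μ X κ f C K m hm hchain hf hbound R εbar hε
  exact ⟨C', hC', fun N => hest N (Real.log (VN μ X f N))⟩

end EdgeworthMC
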